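/- Every automorphism of the left-ideal relation digraph of M_n(F_q) preserves rank: if Ψ is a bijection of M_n(F_q) such that for all X, Y, [X] ⊊ [Y] if and only if [Ψ(X)] ⊊ [Ψ(Y)], then rank(Ψ(X)) = rank(X) for every X ∈ M_n(F_q). -/

import Mathlib

/-- The left ideal of `M_n(F)` generated by `X`: the set of all `C * X`. -/
def leftIdeal {n : ℕ} {F : Type*} [Field F]
    (X : Matrix (Fin n) (Fin n) F) : Set (Matrix (Fin n) (Fin n) F) :=
  {A | ∃ C : Matrix (Fin n) (Fin n) F, A = C * X}

/-!
Left ideals `[X]` are ordered like the row spaces of `X`, and every subspace of `F ^ n` is a row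
space. The rank of `X` is therefore the supremum of the lengths of strict chains of left ideals
ending at `[X]`, and `n - rank X` that of strict chains starting at `[X]`. A map preserving strict
inclusions can decrease neither number, and since the two add up to `n`, it fixes both.
-/

open Module Order

section Height

variable {α β γ : Type*} [Preorder β] [Preorder γ] {r : α → β} {g : α → γ}

-- With the order on `α` pulled back along `r`, chains in `β` lift to `α` and map on to `γ`.
theorem height_le_height_of_surjective (hr : Function.Surjective r)
    (hg : ∀ ⦃x y⦄, r x < r y → g x < g y) (x : α) : height (r x) ≤ height (g x) := by
  let : Preorder α := Preorder.lift r
  have exists_lift (a : α) (b : β) (hb : b < r a) : ∃ a', a' < a ∧ r a' = b := by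
    obtain ⟨a', rfl⟩ := hr b
    exact ⟨a', hb, rfl⟩
  calc
    height (r x) = height x := (height_eq_of_strictMono r (fun _ _ h ↦ h) exists_lift x).symm
    _ ≤ height (g x) := height_le_height_apply_of_strictMono g hg x

theorem coheight_le_coheight_of_surjective (hr : Function.Surjective r)
    (hg : ∀ ⦃x y⦄, r x < r y → g x < g y) (x : α) : coheight (r x) ≤ coheight (g x) := by
  rw [← height_toDual, ← height_toDual]
  exact height_le_height_of_surjective (OrderDual.toDual.surjective.comp hr)
    (g := OrderDual.toDual ∘ g) (fun _ _ h ↦ OrderDual.toDual_lt_toDual.mpr (hg h)) x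

end Height

section Subspace

variable {K V : Type*} [DivisionRing K] [AddCommGroup V] [Module K V] [FiniteDimensional K V]

theorem height_submodule_eq_finrank (W : Submodule K V) : height W = finrank K W := by
  rw [← length_submodule, length_eq_finrank]

theorem coheight_submodule_eq_finrank_quotient (W : Submodule K V) :
    coheight W = finrank K (V ⧸ W) := by
  rw [← length_quotient, length_eq_finrank]

theorem finrank_eq_of_surjective_of_lt_imp_lt {α : Type*} {r g : α → Submodule K V}
    (hr : Function.Surjective r) (hg : ∀ ⦃x y⦄, r x < r y → g x < g y) (x : α) :
    finrank K (g x) = finrank K (r x) := by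
  have dim_le : finrank K (r x) ≤ finrank K (g x) := by
    simpa only [height_submodule_eq_finrank, Nat.cast_le] using
      height_le_height_of_surjective hr hg x
  have codim_le : finrank K (V ⧸ r x) ≤ finrank K (V ⧸ g x) := by
    simpa only [coheight_submodule_eq_finrank_quotient, Nat.cast_le] using
      coheight_le_coheight_of_surjective hr hg x
  have := (r x).finrank_quotient_add_finrank
  have := (g x).finrank_quotient_add_finrank
  lia

end Subspace

section RowSpace

variable {R l m n : Type*}

/-- The row space of a matrix: the left `R`-submodule of `n → R` spanned by its rows. -/
def rowSpace [Semiring R] (X : Matrix m n R) : Submodule R (n → R) :=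
  Submodule.span R (Set.range X.row)

theorem mem_rowSpace_iff [Semiring R] [Fintype m] {X : Matrix m n R} {v : n → R} :
    v ∈ rowSpace X ↔ ∃ c : m → R, Matrix.vecMul c X = v := by
  simp only [rowSpace, Submodule.mem_span_range_iff_exists_fun, Matrix.vecMul_eq_sum,
    Matrix.row_def]

theorem rowSpace_le_iff_exists_eq_mul [Semiring R] [Fintype m] {X : Matrix l n R}
    {Y : Matrix m n R} : rowSpace X ≤ rowSpace Y ↔ ∃ C : Matrix l m R, X = C * Y := by
  calc
    rowSpace X ≤ rowSpace Y ↔ ∀ i, ∃ c : m → R, Matrix.vecMul c Y = X.row i := by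
      rw [rowSpace, Submodule.span_le, Set.range_subset_iff]
      exact forall_congr' fun _ ↦ mem_rowSpace_iff
    _ ↔ ∃ C : l → m → R, ∀ i, Matrix.vecMul (C i) Y = X.row i := Classical.skolem
    _ ↔ ∃ C : Matrix l m R, X = C * Y :=
      exists_congr fun _ ↦ funext_iff.symm.trans eq_comm

theorem rowSpace_surjective [DivisionRing R] [Finite n] :
    Function.Surjective (rowSpace : Matrix n n R → Submodule R (n → R)) := by
  classical
  cases nonempty_fintype n
  intro W
  obtain ⟨W', hW⟩ := W.exists_isCompl
  refine ⟨LinearMap.toMatrixRight' (W.projection W' hW), ?_⟩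
  rw [rowSpace, ← range_vecMulLinear]
  exact (congrArg LinearMap.range (LinearMap.toMatrixRight'.symm_apply_apply _)).trans
    (Submodule.range_projection hW)

theorem finrank_rowSpace [Field R] [Finite m] [Fintype n] (X : Matrix m n R) :
    finrank R (rowSpace X) = X.rank :=
  X.rank_eq_finrank_span_row.symm

end RowSpace

section LeftIdeal

variable {n : ℕ} {F : Type*} [Field F] {X Y : Matrix (Fin n) (Fin n) F}

theorem leftIdeal_subset_iff : leftIdeal X ⊆ leftIdeal Y ↔ rowSpace X ≤ rowSpace Y := by
  rw [rowSpace_le_iff_exists_eq_mul]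
  constructor
  · exact fun h ↦ h ⟨1, (one_mul X).symm⟩
  · rintro ⟨C, rfl⟩ _ ⟨D, rfl⟩
    exact ⟨D * C, (mul_assoc D C Y).symm⟩

theorem leftIdeal_ssubset_iff : leftIdeal X ⊂ leftIdeal Y ↔ rowSpace X < rowSpace Y := by
  rw [ssubset_iff_subset_not_subset, lt_iff_le_not_ge, leftIdeal_subset_iff, leftIdeal_subset_iff]

end LeftIdeal

theorem stmt_9_general {n : ℕ} {F : Type*} [Field F]
    (Ψ : Matrix (Fin n) (Fin n) F → Matrix (Fin n) (Fin n) F)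
    (hΨ : ∀ X Y : Matrix (Fin n) (Fin n) F,
      leftIdeal X ⊂ leftIdeal Y → leftIdeal (Ψ X) ⊂ leftIdeal (Ψ Y))
    (X : Matrix (Fin n) (Fin n) F) :
    (Ψ X).rank = X.rank := by
  simp only [leftIdeal_ssubset_iff] at hΨ
  rw [← finrank_rowSpace, ← finrank_rowSpace]
  exact finrank_eq_of_surjective_of_lt_imp_lt rowSpace_surjective (g := fun Y ↦ rowSpace (Ψ Y)) hΨ X

/-- Every automorphism of the left-ideal relation digraph of `M_n(F_q)`
preserves rank. -/
theorem stmt_9 {n : ℕ} {F : Type*} [Field F] [Fintype F]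
    (Ψ : Matrix (Fin n) (Fin n) F → Matrix (Fin n) (Fin n) F)
    (hbij : Function.Bijective Ψ)
    (hedge : ∀ X Y : Matrix (Fin n) (Fin n) F,
      leftIdeal X ⊂ leftIdeal Y ↔ leftIdeal (Ψ X) ⊂ leftIdeal (Ψ Y))
    (X : Matrix (Fin n) (Fin n) F) :
    (Ψ X).rank = X.rank :=
  stmt_9_general Ψ (fun A B ↦ (hedge A B).1) X
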